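/- Consider OMWU with step size η > 0 in the 2-periodic matching-pennies game (encoded by sequences a, b as in the context). Let p ∈ (0, 1/4) with 16·√η ≤ p, and assume 1 − a(0) ≥ 1/2 + 2p and 1 − b(0) ≥ 1/2 + 2p. Let t ≥ 3 be an integer, and assume that for every k with −1 ≤ k < t one has 1 − a(k) ≤ 1 − √η and 1 − b(k) ≤ 1 − √η. Then the KL-divergence increases: D(t+2) − D(t) ≥ (3/4)·p²·η³. -/

import Mathlib

/-- KL-divergence from the uniform strategy `(1/2, 1/2)` to `(x, 1-x)`. -/
noncomputable def KLhalf (x : ℝ) : ℝ :=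
  (1/2) * Real.log (1/(2*x)) + (1/2) * Real.log (1/(2*(1-x)))

/-- OMWU dynamics with step size `η` in the 2-periodic matching-pennies game:
`a t` is the probability player 1 assigns to its first strategy at time `t`,
`b t` that of player 2. -/
def OMWU (η : ℝ) (a b : ℤ → ℝ) : Prop :=
  (∀ t : ℤ, -1 ≤ t → (0 < a t ∧ a t < 1) ∧ (0 < b t ∧ b t < 1)) ∧
  (∀ t : ℤ, 0 ≤ t → Even t →
    (a (t+1) = a t * Real.exp (-(2*η)*(1 - b t) - η*(1 - b (t-1))) /
      (a t * Real.exp (-(2*η)*(1 - b t) - η*(1 - b (t-1)))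
        + (1 - a t) * Real.exp (-(2*η)*(b t) - η*(b (t-1)))) ∧
    b (t+1) = b t * Real.exp ((2*η)*(1 - a t) + η*(1 - a (t-1))) /
      (b t * Real.exp ((2*η)*(1 - a t) + η*(1 - a (t-1)))
        + (1 - b t) * Real.exp ((2*η)*(a t) + η*(a (t-1)))))) ∧
  (∀ t : ℤ, 0 ≤ t → Odd t →
    (a (t+1) = a t * Real.exp ((2*η)*(1 - b t) + η*(1 - b (t-1))) /
      (a t * Real.exp ((2*η)*(1 - b t) + η*(1 - b (t-1)))
        + (1 - a t) * Real.exp ((2*η)*(b t) + η*(b (t-1)))) ∧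
    b (t+1) = b t * Real.exp (-(2*η)*(1 - a t) - η*(1 - a (t-1))) /
      (b t * Real.exp (-(2*η)*(1 - a t) - η*(1 - a (t-1)))
        + (1 - b t) * Real.exp (-(2*η)*(a t) - η*(a (t-1))))))

/-!
In the dual coordinates `x = artanh (1 - 2a)`, `y = artanh (1 - 2b)` the update is additive: at time
`k` player 1 moves by `(-1) ^ k * η * (tanh (y k) + tanh (y (k - 1)) / 2)`, player 2 likewise with
the opposite sign, and the KL-divergence becomes `log cosh x + log cosh y`. As the sign alternates,
two consecutive moves nearly cancel and leave
`x (k + 2) - x k = ± η / 2 * (tanh (y k) + tanh (y (k - 1)) - 2 * tanh (y (k + 1)))`.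
Here `y k - y (k + 1)` has order `η`, with a known sign while `tanh x` is bounded below, whereas
`y (k - 1) - y (k + 1)` has order only `η ^ 2`. Hence `x` grows by about `η ^ 2 / cosh (y k) ^ 2`
every two steps, so the lower bound on `tanh x` persists, and convexity of `log cosh` turns the
growth of `x` and `y` into growth of the divergence.
-/

section Tanh

open Real Set

theorem hasDerivAt_tanh (x : ℝ) : HasDerivAt tanh (1 / cosh x ^ 2) x := by
  have h := (hasDerivAt_sinh x).div (hasDerivAt_cosh x) (cosh_pos x).ne'
  rw [← sq, ← sq, cosh_sq_sub_sinh_sq] at h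
  exact h.congr_of_eventuallyEq (.of_forall tanh_eq_sinh_div_cosh)

theorem one_div_cosh_sq (x : ℝ) : 1 / cosh x ^ 2 = 1 - tanh x ^ 2 := by
  have := (cosh_pos x).ne'
  rw [tanh_eq_sinh_div_cosh]
  field_simp
  exact (cosh_sq_sub_sinh_sq x).symm

theorem exists_tanh_sub_eq_div_cosh_sq {u v : ℝ} (huv : u ≤ v) :
    ∃ ξ ∈ Icc u v, tanh v - tanh u = (v - u) / cosh ξ ^ 2 := by
  rcases huv.eq_or_lt with rfl | huv
  · exact ⟨u, by simp, by simp⟩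
  · obtain ⟨ξ, hξ, h⟩ := exists_hasDerivAt_eq_slope tanh _ huv
      (fun x _ ↦ (hasDerivAt_tanh x).continuousAt.continuousWithinAt)
      (fun x _ ↦ hasDerivAt_tanh x)
    refine ⟨ξ, Ioo_subset_Icc_self hξ, ?_⟩
    rw [eq_div_iff (sub_pos.2 huv).ne'] at h
    rw [← h]
    ring

theorem monotone_tanh : Monotone tanh := fun u v huv ↦ by
  obtain ⟨ξ, -, h⟩ := exists_tanh_sub_eq_div_cosh_sq huv
  have := div_nonneg (sub_nonneg.2 huv) (sq_nonneg (cosh ξ))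
  linarith

theorem abs_tanh_sub_tanh_le (u v : ℝ) : |tanh u - tanh v| ≤ |u - v| := by
  wlog huv : v ≤ u generalizing u v
  · rw [abs_sub_comm, abs_sub_comm u]
    exact this v u (le_of_not_ge huv)
  obtain ⟨ξ, -, h⟩ := exists_tanh_sub_eq_div_cosh_sq huv
  rw [h, abs_div, abs_of_pos (pow_pos (cosh_pos ξ) 2)]
  exact div_le_self (abs_nonneg _) (one_le_pow₀ (one_le_cosh ξ))

theorem cosh_le_exp_abs_sub_mul_cosh (u v : ℝ) : cosh u ≤ exp |u - v| * cosh v := by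
  have hpos : exp u ≤ exp |u - v| * exp v := by
    rw [← exp_add, exp_le_exp]
    linarith [le_abs_self (u - v)]
  have hneg : exp (-u) ≤ exp |u - v| * exp (-v) := by
    rw [← exp_add, exp_le_exp]
    linarith [neg_abs_le (u - v)]
  rw [cosh_eq, cosh_eq]
  linarith

theorem cosh_sq_le_two_mul_cosh_sq {u v : ℝ} (huv : |u - v| ≤ 1 / 4) :
    cosh u ^ 2 ≤ 2 * cosh v ^ 2 := by
  have hexp : exp (1 / 4) ^ 2 ≤ 2 := by
    have h := add_one_le_exp (-(1 / 2 : ℝ))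
    have hmul : exp (1 / 4) ^ 2 * exp (-(1 / 2)) = 1 := by
      rw [← exp_nat_mul, ← exp_add]
      norm_num
    nlinarith [sq_nonneg (exp (1 / 4))]
  calc cosh u ^ 2 ≤ (exp (1 / 4) * cosh v) ^ 2 := by
        have := cosh_pos u
        gcongr
        exact (cosh_le_exp_abs_sub_mul_cosh u v).trans (by have := cosh_pos v; gcongr)
    _ = exp (1 / 4) ^ 2 * cosh v ^ 2 := mul_pow _ _ _
    _ ≤ 2 * cosh v ^ 2 := by gcongr

theorem div_cosh_sq_le_tanh_add_tanh_sub {z d e : ℝ} (hd : 0 ≤ d) (hd' : d ≤ 1 / 5)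
    (he : -(d / 8) ≤ e) :
    d / 4 / cosh (z + d) ^ 2 ≤ tanh (z + d) + tanh (z + e) - 2 * tanh z := by
  -- On an interval of length `d + d / 8 ≤ 1 / 4` the derivative `1 / cosh ^ 2` varies by a factor
  -- of at most `2`, so the gain over `[z, z + d]` exceeds the loss over `[z - d / 8, z]`.
  have forward : d / 2 / cosh (z + d) ^ 2 ≤ tanh (z + d) - tanh z := by
    obtain ⟨ξ, ⟨hzξ, hξd⟩, h⟩ :=
      exists_tanh_sub_eq_div_cosh_sq (le_add_of_nonneg_right hd : z ≤ z + d)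
    have hcosh : cosh ξ ^ 2 ≤ 2 * cosh (z + d) ^ 2 :=
      cosh_sq_le_two_mul_cosh_sq (abs_le.2 ⟨by linarith, by linarith⟩)
    have := cosh_pos ξ
    rw [h, add_sub_cancel_left, div_div]
    gcongr
  have backward : tanh z - tanh (z + e) ≤ d / 4 / cosh (z + d) ^ 2 := by
    obtain ⟨ξ, ⟨hξd, hξz⟩, h⟩ :=
      exists_tanh_sub_eq_div_cosh_sq (by linarith : z - d / 8 ≤ z)
    have hcosh : cosh (z + d) ^ 2 ≤ 2 * cosh ξ ^ 2 :=
      cosh_sq_le_two_mul_cosh_sq (abs_le.2 ⟨by linarith, by linarith⟩)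
    have hmono : tanh (z - d / 8) ≤ tanh (z + e) := monotone_tanh (by linarith)
    have := cosh_pos (z + d)
    calc tanh z - tanh (z + e) ≤ tanh z - tanh (z - d / 8) := by linarith
      _ = d / 4 / (2 * cosh ξ ^ 2) := by rw [h]; ring
      _ ≤ d / 4 / cosh (z + d) ^ 2 := by gcongr
  have hhalf : d / 2 / cosh (z + d) ^ 2 = d / 4 / cosh (z + d) ^ 2 + d / 4 / cosh (z + d) ^ 2 := by
    ring
  linarith

theorem sq_mul_div_cosh_sq_le_mul_tanh_add_tanh_sub {s z d e : ℝ} (hd : 0 ≤ d)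
    (hsd : |s| * d ≤ 1 / 5) (he : -(d / 8) ≤ e) :
    s ^ 2 * (d / 4) / cosh (z + s * d) ^ 2 ≤
      s * (tanh (z + s * d) + tanh (z + s * e) - 2 * tanh z) := by
  wlog hs : 0 ≤ s generalizing s z
  · have h := this (s := -s) (z := -z) (by rwa [abs_neg]) (by linarith)
    simp only [neg_mul, ← neg_add, cosh_neg, tanh_neg, neg_sq] at h
    linarith
  rw [abs_of_nonneg hs] at hsd
  have h := div_cosh_sq_le_tanh_add_tanh_sub (z := z) (mul_nonneg hs hd) hsd
    (by nlinarith : -(s * d / 8) ≤ s * e)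
  calc s ^ 2 * (d / 4) / cosh (z + s * d) ^ 2
      = s * (s * d / 4 / cosh (z + s * d) ^ 2) := by ring
    _ ≤ _ := mul_le_mul_of_nonneg_left h hs

theorem tanh_mul_sub_le_log_cosh_sub (x y : ℝ) :
    tanh x * (y - x) ≤ log (cosh y) - log (cosh x) := by
  rw [← log_div (cosh_pos _).ne' (cosh_pos _).ne',
    le_log_iff_exp_le (div_pos (cosh_pos _) (cosh_pos _))]
  calc exp (tanh x * (y - x)) ≤ cosh (y - x) + tanh x * sinh (y - x) :=
        exp_mul_le_cosh_add_mul_sinh (abs_tanh_lt_one x).le _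
    _ = cosh (x + (y - x)) / cosh x := by
        rw [cosh_add, tanh_eq_sinh_div_cosh]
        field_simp [(cosh_pos x).ne']
    _ = cosh y / cosh x := by rw [add_sub_cancel]

end Tanh

section DualCoord

open Real Set

/-- The dual (mirror-descent) coordinate of the mixed strategy `(a, 1 - a)`: half the log-odds of
its second action, with value `0` at the uniform strategy. -/
noncomputable def dualCoord (a : ℝ) : ℝ :=
  artanh (1 - 2 * a)

theorem one_sub_two_mul_mem_Ioo {a : ℝ} (ha : a ∈ Ioo 0 1) : 1 - 2 * a ∈ Ioo (-1) 1 :=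
  ⟨by linarith [ha.2], by linarith [ha.1]⟩

theorem tanh_dualCoord {a : ℝ} (ha : a ∈ Ioo 0 1) : tanh (dualCoord a) = 1 - 2 * a :=
  tanh_artanh (one_sub_two_mul_mem_Ioo ha)

theorem dualCoord_eq_log {a : ℝ} (ha : a ∈ Ioo 0 1) : dualCoord a = 1 / 2 * log ((1 - a) / a) := by
  rw [dualCoord, artanh_eq_half_log (Ioo_subset_Icc_self (one_sub_two_mul_mem_Ioo ha))]
  congr 2
  have := ha.1.ne'
  field_simp
  ring

theorem KLhalf_eq_log_cosh_dualCoord {a : ℝ} (ha : a ∈ Ioo 0 1) :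
    KLhalf a = log (cosh (dualCoord a)) := by
  have ha₁ : 0 < 1 - a := sub_pos.2 ha.2
  have ha₀ : 0 < a := ha.1
  rw [KLhalf, dualCoord, cosh_artanh (one_sub_two_mul_mem_Ioo ha),
    show 1 - (1 - 2 * a) ^ 2 = (2 * a) * (2 * (1 - a)) by ring, one_div (2 * a), log_inv,
    one_div (2 * (1 - a)), log_inv, one_div (√_), log_inv, log_sqrt (by positivity),
    log_mul (x := 2 * a) (by positivity) (by positivity)]
  ring

theorem dualCoord_exp_weights {a : ℝ} (ha : a ∈ Ioo 0 1) (α β : ℝ) :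
    dualCoord (a * exp α / (a * exp α + (1 - a) * exp β)) = dualCoord a + (β - α) / 2 := by
  have ha₁ : 0 < 1 - a := sub_pos.2 ha.2
  have hα : 0 < a * exp α := mul_pos ha.1 (exp_pos α)
  have hβ : 0 < (1 - a) * exp β := mul_pos ha₁ (exp_pos β)
  have hmem : a * exp α / (a * exp α + (1 - a) * exp β) ∈ Ioo 0 1 :=
    ⟨by positivity, (div_lt_one (by positivity)).2 (by linarith)⟩
  have hodds : (1 - a * exp α / (a * exp α + (1 - a) * exp β)) /
      (a * exp α / (a * exp α + (1 - a) * exp β)) = (1 - a) / a * exp (β - α) := by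
    have := ha.1.ne'
    rw [exp_sub]
    field_simp
    ring
  rw [dualCoord_eq_log hmem, dualCoord_eq_log ha, hodds,
    log_mul (div_pos ha₁ ha.1).ne' (exp_pos _).ne', log_exp]
  ring

end DualCoord

section DualDynamics

open Real

/-- The optimistic payoff difference at time `k` induced by an opponent with dual trajectory `z`,
scaled so that it has weight `1` on the current and `1 / 2` on the previous observation. -/
noncomputable def optimisticPayoff (z : ℤ → ℝ) (k : ℤ) : ℝ :=
  tanh (z k) + tanh (z (k - 1)) / 2

/-- OMWU for the 2-periodic game in dual coordinates. The step size may have either sign: negating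
it amounts to exchanging the players. -/
structure DualOMWU (η : ℝ) (x y : ℤ → ℝ) : Prop where
  left : ∀ k, 0 ≤ k → x (k + 1) = x k + (-1) ^ k * η * optimisticPayoff y k
  right : ∀ k, 0 ≤ k → y (k + 1) = y k - (-1) ^ k * η * optimisticPayoff x k

theorem OMWU.dualOMWU {η : ℝ} {a b : ℤ → ℝ} (h : OMWU η a b) :
    DualOMWU η (fun k ↦ dualCoord (a k)) (fun k ↦ dualCoord (b k)) := by
  obtain ⟨hmem, heven, hodd⟩ := h
  have ha (k : ℤ) (hk : -1 ≤ k) : tanh (dualCoord (a k)) = 1 - 2 * a k :=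
    tanh_dualCoord (hmem k hk).1
  have hb (k : ℤ) (hk : -1 ≤ k) : tanh (dualCoord (b k)) = 1 - 2 * b k :=
    tanh_dualCoord (hmem k hk).2
  constructor <;> intro k hk <;> rcases Int.even_or_odd k with hpar | hpar
  · rw [(heven k hk hpar).1, dualCoord_exp_weights (hmem k (by lia)).1, optimisticPayoff,
      hb k (by lia), hb (k - 1) (by lia), hpar.neg_one_zpow]
    ring
  · rw [(hodd k hk hpar).1, dualCoord_exp_weights (hmem k (by lia)).1, optimisticPayoff,
      hb k (by lia), hb (k - 1) (by lia), hpar.neg_one_zpow]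
    ring
  · rw [(heven k hk hpar).2, dualCoord_exp_weights (hmem k (by lia)).2, optimisticPayoff,
      ha k (by lia), ha (k - 1) (by lia), hpar.neg_one_zpow]
    ring
  · rw [(hodd k hk hpar).2, dualCoord_exp_weights (hmem k (by lia)).2, optimisticPayoff,
      ha k (by lia), ha (k - 1) (by lia), hpar.neg_one_zpow]
    ring

theorem abs_optimisticPayoff_le (z : ℤ → ℝ) (k : ℤ) : |optimisticPayoff z k| ≤ 3 / 2 := by
  have h₀ := abs_lt.1 (abs_tanh_lt_one (z k))
  have h₁ := abs_lt.1 (abs_tanh_lt_one (z (k - 1)))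
  rw [optimisticPayoff, abs_le]
  constructor <;> linarith

namespace DualOMWU

variable {η : ℝ} {x y : ℤ → ℝ}

theorem symm (h : DualOMWU η x y) : DualOMWU (-η) y x where
  left k hk := by rw [h.right k hk]; ring
  right k hk := by rw [h.left k hk]; ring

theorem abs_sub_le (h : DualOMWU η x y) {k : ℤ} (hk : 0 ≤ k) :
    |x (k + 1) - x k| ≤ 3 / 2 * |η| := by
  rw [h.left k hk, add_sub_cancel_left, abs_mul, abs_mul, abs_neg_one_zpow, one_mul, mul_comm]
  exact mul_le_mul_of_nonneg_right (abs_optimisticPayoff_le y k) (abs_nonneg η)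

theorem abs_tanh_sub_le (h : DualOMWU η x y) {k : ℤ} (hk : 0 ≤ k) :
    |tanh (x (k + 1)) - tanh (x k)| ≤ 3 / 2 * |η| :=
  (abs_tanh_sub_tanh_le _ _).trans (h.abs_sub_le hk)

theorem two_step_sub (h : DualOMWU η x y) {k : ℤ} (hk : 0 ≤ k) :
    x (k + 2) - x k = (-1) ^ k * η / 2 *
      (tanh (y k) + tanh (y (k - 1)) - 2 * tanh (y (k + 1))) := by
  rw [show k + 2 = k + 1 + 1 by ring, h.left (k + 1) (by lia), h.left k hk,
    zpow_add_one₀ (by norm_num), optimisticPayoff, optimisticPayoff, add_sub_cancel_right]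
  ring

theorem optimisticPayoff_sub_ge (h : DualOMWU η x y) {k : ℤ} (hk : 2 ≤ k) :
    -(9 / 4 * |η|) ≤ optimisticPayoff x k - optimisticPayoff x (k - 1) := by
  have h₁ := abs_le.1 (h.abs_tanh_sub_le (k := k - 1) (by lia))
  have h₂ := abs_le.1 (h.abs_tanh_sub_le (k := k - 1 - 1) (by lia))
  rw [sub_add_cancel] at h₁ h₂
  rw [optimisticPayoff, optimisticPayoff]
  linarith

theorem two_step_sub_ge (h : DualOMWU η x y) {q : ℝ} (hq : 12 * |η| ≤ q) {k : ℤ} (hk : 2 ≤ k)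
    (hx : q ≤ tanh (x k)) (hx' : q ≤ tanh (x (k - 1))) :
    3 / 16 * η ^ 2 * q / cosh (y k) ^ 2 ≤ x (k + 2) - x k := by
  set s : ℝ := (-1) ^ k * η with hs
  set d := optimisticPayoff x k with hd
  set e := d - optimisticPayoff x (k - 1) with he
  have hs_abs : |s| = |η| := by rw [hs, abs_mul, abs_neg_one_zpow, one_mul]
  have hs_sq : s ^ 2 = η ^ 2 := (sq_eq_sq_iff_abs_eq_abs _ _).2 hs_abs
  have hq_lt : q < 1 := hx.trans_lt (tanh_lt_one _)
  have hd_ge : 3 / 2 * q ≤ d := by rw [hd, optimisticPayoff]; linarith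
  have hd_le : d ≤ 3 / 2 := (le_abs_self d).trans (abs_optimisticPayoff_le x k)
  have he_ge : -(d / 8) ≤ e := by linarith [h.optimisticPayoff_sub_ge hk]
  have hη := abs_nonneg η
  have hsd : |s| * d ≤ 1 / 5 := by rw [hs_abs]; nlinarith
  have hyk : y (k + 1) + s * d = y k := by rw [h.right k (by lia)]; ring
  have hyk' : y (k + 1) + s * e = y (k - 1) := by
    have hy := h.right (k - 1) (by lia)
    rw [sub_add_cancel, zpow_sub_one₀ (by norm_num)] at hy
    rw [h.right k (by lia), he, hy]
    ring
  have key := sq_mul_div_cosh_sq_le_mul_tanh_add_tanh_sub (z := y (k + 1)) (by linarith) hsd he_ge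
  rw [hyk, hyk', hs_sq] at key
  calc 3 / 16 * η ^ 2 * q / cosh (y k) ^ 2
      = η ^ 2 * (3 / 2 * q / 4) / cosh (y k) ^ 2 / 2 := by ring
    _ ≤ η ^ 2 * (d / 4) / cosh (y k) ^ 2 / 2 := by gcongr
    _ ≤ s * (tanh (y k) + tanh (y (k - 1)) - 2 * tanh (y (k + 1))) / 2 := by gcongr
    _ = x (k + 2) - x k := by rw [h.two_step_sub (by lia)]; ring

theorem le_tanh (h : DualOMWU η x y) {q : ℝ} (hq : 12 * |η| ≤ q)
    (h₀ : q + 9 / 2 * |η| ≤ tanh (x 0)) {k : ℤ} (hk : 0 ≤ k) : q ≤ tanh (x k) := by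
  have hη := abs_nonneg η
  have h₁ := abs_le.1 (h.abs_tanh_sub_le (k := 0) (by lia))
  have h₂ := abs_le.1 (h.abs_tanh_sub_le (k := 1) (by lia))
  have h₃ := abs_le.1 (h.abs_tanh_sub_le (k := 2) (by lia))
  norm_num only at h₁ h₂ h₃
  lift k to ℕ using hk
  induction k using Nat.strong_induction_on with
  | _ n ih =>
    match n with
    | 0 => norm_num only; linarith
    | 1 => norm_num only; linarith
    | 2 => norm_num only; linarith
    | 3 => norm_num only; linarith
    | m + 4 =>
      have hx := ih (m + 2) (by lia)
      have hx' := ih (m + 1) (by lia)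
      have hstep := h.two_step_sub_ge hq (k := (m + 2 : ℕ)) (by lia) hx
        (by convert hx' using 3; push_cast; ring)
      have hgain : 0 ≤ 3 / 16 * η ^ 2 * q / cosh (y (m + 2 : ℕ)) ^ 2 := by
        have : 0 ≤ q := by linarith
        positivity
      calc q ≤ tanh (x (m + 2 : ℕ)) := hx
        _ ≤ tanh (x ((m + 2 : ℕ) + 2)) := monotone_tanh (by linarith)
        _ = tanh (x (m + 4 : ℕ)) := by norm_cast

theorem one_div_cosh_sq_ge (h : DualOMWU η x y) {k : ℤ} (hk : 1 ≤ k) (hx : 0 ≤ tanh (x k)) :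
    1 - tanh (x (k - 1)) - 3 / 2 * |η| ≤ 1 / cosh (x k) ^ 2 := by
  have hstep := abs_le.1 (h.abs_tanh_sub_le (k := k - 1) (by lia))
  rw [sub_add_cancel] at hstep
  rw [one_div_cosh_sq]
  nlinarith [tanh_lt_one (x k)]

theorem log_cosh_sub_ge (h : DualOMWU η x y) {q : ℝ} (hq : 12 * |η| ≤ q)
    (hx₀ : q + 9 / 2 * |η| ≤ tanh (x 0)) (hy₀ : q + 9 / 2 * |η| ≤ tanh (y 0))
    {k : ℤ} (hk : 2 ≤ k) (hy : 2 * |η| ≤ 1 - tanh (y (k - 1))) :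
    3 / 32 * q ^ 2 * |η| ^ 3 ≤ log (cosh (x (k + 2))) - log (cosh (x k)) := by
  have hη := abs_nonneg η
  have hq₀ : 0 ≤ q := by linarith
  have hxk : q ≤ tanh (x k) := h.le_tanh hq hx₀ (by lia)
  have hyk : q ≤ tanh (y k) := h.symm.le_tanh (by rwa [abs_neg]) (by rwa [abs_neg]) (by lia)
  have hweight : |η| / 2 ≤ 1 / cosh (y k) ^ 2 := by
    have := h.symm.one_div_cosh_sq_ge (k := k) (by lia) (hq₀.trans hyk)
    rw [abs_neg] at this
    linarith
  have hstep := h.two_step_sub_ge hq hk hxk (h.le_tanh hq hx₀ (by lia))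
  calc 3 / 32 * q ^ 2 * |η| ^ 3 = q * (3 / 16 * |η| ^ 2 * q * (|η| / 2)) := by ring
    _ ≤ q * (3 / 16 * |η| ^ 2 * q * (1 / cosh (y k) ^ 2)) := by gcongr
    _ = q * (3 / 16 * η ^ 2 * q / cosh (y k) ^ 2) := by rw [sq_abs]; ring
    _ ≤ tanh (x k) * (x (k + 2) - x k) := by
        have := hq₀.trans hxk
        gcongr
    _ ≤ log (cosh (x (k + 2))) - log (cosh (x k)) := tanh_mul_sub_le_log_cosh_sub _ _

end DualOMWU

end DualDynamics

theorem omwu_kl_increasing_general {η : ℝ} (hη : 0 < η) {a b : ℤ → ℝ} (h : OMWU η a b)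
    {p : ℝ} (hpη : 8 * η ≤ p) (ha₀ : 1 - a 0 ≥ 1 / 2 + 2 * p) (hb₀ : 1 - b 0 ≥ 1 / 2 + 2 * p)
    {t : ℤ} (ht : 2 ≤ t) (ha : η ≤ a (t - 1)) (hb : η ≤ b (t - 1)) :
    (KLhalf (a (t + 2)) + KLhalf (b (t + 2))) - (KLhalf (a t) + KLhalf (b t)) ≥
      (3 / 4) * p ^ 2 * η ^ 3 := by
  have hKLa (k : ℤ) (hk : -1 ≤ k) := KLhalf_eq_log_cosh_dualCoord (h.1 k hk).1
  have hKLb (k : ℤ) (hk : -1 ≤ k) := KLhalf_eq_log_cosh_dualCoord (h.1 k hk).2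
  have htanha (k : ℤ) (hk : -1 ≤ k) := tanh_dualCoord (h.1 k hk).1
  have htanhb (k : ℤ) (hk : -1 ≤ k) := tanh_dualCoord (h.1 k hk).2
  have hη_abs : |η| = η := abs_of_pos hη
  have hη_abs' : |-η| = η := by rw [abs_neg, hη_abs]
  have hx := h.dualOMWU.log_cosh_sub_ge (q := 3 * p) (k := t)
    (by linarith) (by linarith [htanha 0 (by lia)]) (by linarith [htanhb 0 (by lia)]) ht
    (by linarith [htanhb (t - 1) (by lia)])
  have hy := h.dualOMWU.symm.log_cosh_sub_ge (q := 3 * p) (k := t)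
    (by linarith) (by linarith [htanhb 0 (by lia)]) (by linarith [htanha 0 (by lia)]) ht
    (by linarith [htanha (t - 1) (by lia)])
  rw [hη_abs] at hx
  rw [hη_abs'] at hy
  rw [hKLa t (by lia), hKLb t (by lia), hKLa (t + 2) (by lia), hKLb (t + 2) (by lia)]
  have : 0 ≤ p ^ 2 * η ^ 3 := by positivity
  linarith

/-- KL-divergence increase for OMWU under the strong initial condition:
if `1 − a 0 ≥ 1/2 + 2p`, `1 − b 0 ≥ 1/2 + 2p` and the trajectory stays away from
the boundary before time `t ≥ 3`, then `D(t+2) − D(t) ≥ (3/4)·p²·η³`. -/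
theorem omwu_kl_increasing
    (η : ℝ) (hη : 0 < η) (a b : ℤ → ℝ) (h : OMWU η a b)
    (p : ℝ) (hp : 0 < p) (hp4 : p < 1/4) (hpη : 16 * Real.sqrt η ≤ p)
    (ha0 : 1 - a 0 ≥ 1/2 + 2*p) (hb0 : 1 - b 0 ≥ 1/2 + 2*p)
    (t : ℤ) (ht : 3 ≤ t)
    (hbd : ∀ k : ℤ, -1 ≤ k → k < t →
      1 - a k ≤ 1 - Real.sqrt η ∧ 1 - b k ≤ 1 - Real.sqrt η) :
    (KLhalf (a (t+2)) + KLhalf (b (t+2))) - (KLhalf (a t) + KLhalf (b t)) ≥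
      (3/4) * p^2 * η^3 := by
  have hsqrt : η ≤ √η := by nlinarith [Real.mul_self_sqrt hη.le, Real.sqrt_nonneg η]
  obtain ⟨ha, hb⟩ := hbd (t - 1) (by lia) (by lia)
  exact omwu_kl_increasing_general hη h (by linarith) ha0 hb0 (by lia) (by linarith) (by linarith)
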